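/- For every integer k ≥ 1, the function z ↦ z·f_{k−1}(z)/f_k(z) is a continuous, strictly increasing bijection from (0,∞) onto (k,∞). In particular, for every real c > k there is a unique z > 0 with z·f_{k−1}(z)/f_k(z) = c. -/

import Mathlib

/-- `fk k x = ∑_{j ≥ k} x^j / j!`, the tail of the exponential series. -/
noncomputable def fk (k : ℕ) (x : ℝ) : ℝ := ∑' n : ℕ, x ^ (n + k) / (n + k).factorial

theorem hasSum_fk (k : ℕ) (z : ℝ) :
    HasSum (fun n : ℕ => z ^ (n + k) / (n + k).factorial) (fk k z) :=
  ((summable_nat_add_iff k).2 (Real.summable_pow_div_factorial z)).hasSum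

theorem fk_eq_add_fk_succ (k : ℕ) (z : ℝ) :
    fk k z = z ^ k / k.factorial + fk (k + 1) z := by
  have h := (hasSum_fk k z).summable.tsum_eq_zero_add
  simp only [zero_add, add_right_comm _ 1 k] at h
  exact h

theorem fk_zero : fk 0 = Real.exp := by
  funext z
  rw [Real.exp_eq_exp_ℝ, NormedSpace.exp_eq_tsum_div]
  rfl

theorem continuous_fk (k : ℕ) : Continuous (fk k) := by
  induction k with
  | zero => exact fk_zero ▸ Real.continuous_exp
  | succ k ih =>
    have h : fk (k + 1) = fun z => fk k z - z ^ k / k.factorial := by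
      funext z
      rw [fk_eq_add_fk_succ k z, add_sub_cancel_left]
    rw [h]
    fun_prop

theorem pow_div_factorial_le_fk (k : ℕ) {z : ℝ} (hz : 0 ≤ z) :
    z ^ k / k.factorial ≤ fk k z := by
  rw [fk_eq_add_fk_succ]
  exact le_add_of_nonneg_right (tsum_nonneg fun n => by positivity)

theorem fk_pos (k : ℕ) {z : ℝ} (hz : 0 < z) : 0 < fk k z :=
  (by positivity : 0 < z ^ k / k.factorial).trans_le (pow_div_factorial_le_fk k hz.le)

/-- The unnormalized first moment, about `c`, of a Poisson variable conditioned to be at least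
`k + 1`. -/
theorem hasSum_sub_mul_pow_div_factorial (k : ℕ) (c z : ℝ) :
    HasSum (fun n : ℕ => (((n + (k + 1) : ℕ) : ℝ) - c) *
      (z ^ (n + (k + 1)) / (n + (k + 1)).factorial)) (z * fk k z - c * fk (k + 1) z) := by
  refine (((hasSum_fk k z).mul_left z).sub ((hasSum_fk (k + 1) z).mul_left c)).congr_fun ?_
  intro n
  rw [sub_mul, ← add_assoc n k 1, Nat.factorial_succ, pow_succ]
  push_cast
  have h : (n : ℝ) + k + 1 ≠ 0 := by positivity
  field_simp

theorem lt_mul_fk_div_fk (k : ℕ) {z : ℝ} (hz : 0 < z) :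
    ((k + 1 : ℕ) : ℝ) < z * fk k z / fk (k + 1) z := by
  rw [lt_div_iff₀ (fk_pos _ hz), ← sub_pos]
  have h := hasSum_sub_mul_pow_div_factorial k ((k + 1 : ℕ) : ℝ) z
  rw [← h.tsum_eq]
  refine h.summable.tsum_pos (fun n => ?_) 1 ?_
  · push_cast
    rw [add_sub_cancel_right]
    positivity
  · push_cast
    rw [add_sub_cancel_right]
    positivity

theorem le_mul_fk_div_fk (k : ℕ) {z : ℝ} (hz : 0 < z) :
    z ≤ z * fk k z / fk (k + 1) z := by
  rw [le_div_iff₀ (fk_pos _ hz), fk_eq_add_fk_succ k]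
  gcongr
  exact le_add_of_nonneg_left (by positivity)

theorem mul_fk_div_fk_le (k : ℕ) {z : ℝ} (hz : 0 < z) :
    z * fk k z / fk (k + 1) z ≤ z + (k + 1 : ℕ) := by
  rw [div_le_iff₀ (fk_pos _ hz), fk_eq_add_fk_succ k, mul_add, add_mul, add_comm]
  refine add_le_add_right ?_ _
  calc z * (z ^ k / k.factorial)
      = ((k + 1 : ℕ) : ℝ) * (z ^ (k + 1) / (k + 1).factorial) := by
        rw [Nat.factorial_succ, pow_succ]
        push_cast
        field_simp
    _ ≤ _ := by
        gcongr
        exact pow_div_factorial_le_fk _ hz.le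

/-- With `c` the value at `x` and `r = y / x`, the first moment about `c` at `y` is the sum of the
nonnegative terms `(j - c) * (r ^ j - r ^ c) * x ^ j / j!`. -/
theorem strictMonoOn_mul_fk_div_fk (k : ℕ) :
    StrictMonoOn (fun z : ℝ => z * fk k z / fk (k + 1) z) (Set.Ioi 0) := by
  intro x hx y hy hxy
  rw [Set.mem_Ioi] at hx hy
  have hc := lt_mul_fk_div_fk k hx
  dsimp only
  generalize hcx : x * fk k x / fk (k + 1) x = c at hc ⊢
  rw [div_eq_iff (fk_pos _ hx).ne'] at hcx
  rw [lt_div_iff₀ (fk_pos _ hy), ← sub_pos]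
  obtain ⟨r, hr, rfl⟩ : ∃ r : ℝ, 1 < r ∧ r * x = y :=
    ⟨y / x, (one_lt_div hx).2 hxy, div_mul_cancel₀ y hx.ne'⟩
  have h := (hasSum_sub_mul_pow_div_factorial k c (r * x)).sub
    ((hasSum_sub_mul_pow_div_factorial k c x).mul_left (r ^ c))
  have hterm : ∀ n : ℕ, ((n : ℝ) - c) * ((r * x) ^ n / n.factorial) -
      r ^ c * (((n : ℝ) - c) * (x ^ n / n.factorial)) =
      ((n : ℝ) - c) * (r ^ (n : ℝ) - r ^ c) * (x ^ n / n.factorial) := by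
    intro n
    rw [Real.rpow_natCast, mul_pow]
    ring
  simp only [hterm, hcx, sub_self, mul_zero, sub_zero] at h
  rw [← h.tsum_eq]
  refine h.summable.tsum_pos (fun n => mul_nonneg ?_ (by positivity)) 0
    (mul_pos ?_ (by positivity))
  · rcases le_total ((n + (k + 1) : ℕ) : ℝ) c with hn | hn
    · exact mul_nonneg_of_nonpos_of_nonpos (sub_nonpos.2 hn)
        (sub_nonpos.2 (Real.rpow_le_rpow_of_exponent_le hr.le hn))
    · exact mul_nonneg (sub_nonneg.2 hn)
        (sub_nonneg.2 (Real.rpow_le_rpow_of_exponent_le hr.le hn))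
  · rw [zero_add]
    exact mul_pos_of_neg_of_neg (sub_neg.2 hc) (sub_neg.2 (Real.rpow_lt_rpow_of_exponent_lt hr hc))

theorem continuousOn_mul_fk_div_fk (k : ℕ) :
    ContinuousOn (fun z : ℝ => z * fk k z / fk (k + 1) z) (Set.Ioi 0) :=
  (continuous_id.mul (continuous_fk k)).continuousOn.div (continuous_fk (k + 1)).continuousOn
    fun _ hz => (fk_pos _ hz).ne'

theorem surjOn_mul_fk_div_fk (k : ℕ) :
    Set.SurjOn (fun z : ℝ => z * fk k z / fk (k + 1) z) (Set.Ioi 0)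
      (Set.Ioi ((k + 1 : ℕ) : ℝ)) := by
  intro c hc
  rw [Set.mem_Ioi, ← sub_pos] at hc
  have hle : c - (k + 1 : ℕ) ≤ c := sub_le_self _ (Nat.cast_nonneg _)
  obtain ⟨z, hz, hzc⟩ := intermediate_value_Icc hle
    ((continuousOn_mul_fk_div_fk k).mono fun z hz => hc.trans_le hz.1)
    ⟨by simpa using mul_fk_div_fk_le k hc, le_mul_fk_div_fk k (hc.trans_le hle)⟩
  exact ⟨z, hc.trans_le hz.1, hzc⟩

theorem conditioned_poisson_mean_bijective (k : ℕ) (hk : 1 ≤ k) :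
    ContinuousOn (fun z : ℝ => z * fk (k - 1) z / fk k z) (Set.Ioi 0) ∧
    StrictMonoOn (fun z : ℝ => z * fk (k - 1) z / fk k z) (Set.Ioi 0) ∧
    Set.BijOn (fun z : ℝ => z * fk (k - 1) z / fk k z) (Set.Ioi 0) (Set.Ioi (k : ℝ)) ∧
    ∀ c : ℝ, (k : ℝ) < c → ∃! z : ℝ, 0 < z ∧ z * fk (k - 1) z / fk k z = c := by
  obtain ⟨k, rfl⟩ := Nat.exists_eq_add_of_le' hk
  rw [Nat.add_sub_cancel]
  have hmono := strictMonoOn_mul_fk_div_fk k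
  have hsurj := surjOn_mul_fk_div_fk k
  refine ⟨continuousOn_mul_fk_div_fk k, hmono,
    ⟨fun z hz => lt_mul_fk_div_fk k hz, hmono.injOn, hsurj⟩, fun c hc => ?_⟩
  obtain ⟨z, hz, hzc⟩ := hsurj hc
  exact ⟨z, ⟨hz, hzc⟩, fun w hw => hmono.injOn hw.1 hz (hw.2.trans hzc.symm)⟩
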